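/- arXiv:2404.04832 — 2 statements merged into one kernel-verified Lean document; each statement's English description precedes it below -/
import Mathlib

section
/- Fix a real constant D > 0 and reals n_h, n_v with n_h + n_v ≠ 0. The derivative of the map α ↦ l̄(n_h, n_v, α) at α = 0 equals 2D·[ 3(n_h² + n_v²)/(2(n_h + n_v)) + n_h·n_v/(2(n_h + n_v)) − 1/(4(n_h + n_v)) − (n_h + n_v) + 1 ]. Moreover, if in addition n_h ≥ 4, n_v ≥ 4, n_h ≤ (3/2)·n_v and n_v ≤ (3/2)·n_h, then this quantity is strictly negative; equivalently, under these hypotheses 2n_h² + 2n_v² − 6·n_h·n_v + 4(n_h + n_v) − 1 < 0. -/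
/-- Average travel distance of a sorting task. -/
noncomputable def lbar (D nh nv α : ℝ) : ℝ :=
  2 * D * ((nh^2 + nv^2) / (nh + nv) * ((-α^4 - 5*α^2 + 18*α) / 12)
    + nh * nv / (nh + nv) * ((-α^2 + 2*α) / 4)
    + (3*α^3 - α^2 - 3*α - 5) / (12 * (nh + nv))
    + (nh + nv) * ((α^2 - 2*α + 1) / 2)
    + (-α^2 + 2*α) / 2)

/-!
The sign of the slope at `α = 0` is that of `q(a, b) = 2a² + 2b² - 6ab + 4(a + b) - 1`, where
`a = n_h` and `b = n_v`. As `q` is symmetric, take `a ≤ b`; then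
`q(a, b) = -(b - a)(3a - 2b) - (a + b)(a - 4) - 1`, and both products are nonnegative because
`a ≤ b ≤ 3a/2` and `a ≥ 4`.
-/

theorem hasDerivAt_lbar (D nh nv α : ℝ) :
    HasDerivAt (lbar D nh nv)
      (2 * D * ((nh^2 + nv^2) / (nh + nv) * ((-4*α^3 - 10*α + 18) / 12)
        + nh * nv / (nh + nv) * ((-2*α + 2) / 4)
        + (9*α^2 - 2*α - 3) / (12 * (nh + nv))
        + (nh + nv) * (α - 1)
        + (1 - α))) α := by
  have h₁ : HasDerivAt (fun x : ℝ => x) 1 α := hasDerivAt_id' α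
  have h₂ : HasDerivAt (fun x : ℝ => x^2) (2*α) α := by simpa using hasDerivAt_pow 2 α
  have h₃ : HasDerivAt (fun x : ℝ => x^3) (3*α^2) α := by simpa using hasDerivAt_pow 3 α
  have h₄ : HasDerivAt (fun x : ℝ => x^4) (4*α^3) α := by simpa using hasDerivAt_pow 4 α
  have sumSq_term : HasDerivAt (fun x : ℝ => (-x^4 - 5*x^2 + 18*x) / 12)
      ((-4*α^3 - 10*α + 18) / 12) α :=
    (((h₄.neg.sub (h₂.const_mul 5)).add (h₁.const_mul 18)).div_const 12).congr_deriv (by ring)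
  have prod_term : HasDerivAt (fun x : ℝ => (-x^2 + 2*x) / 4) ((-2*α + 2) / 4) α :=
    ((h₂.neg.add (h₁.const_mul 2)).div_const 4).congr_deriv (by ring)
  have inv_term : HasDerivAt (fun x : ℝ => 3*x^3 - x^2 - 3*x - 5) (9*α^2 - 2*α - 3) α :=
    ((((h₃.const_mul 3).sub h₂).sub (h₁.const_mul 3)).sub_const 5).congr_deriv (by ring)
  have sum_term : HasDerivAt (fun x : ℝ => (x^2 - 2*x + 1) / 2) (α - 1) α :=
    (((h₂.sub (h₁.const_mul 2)).add_const 1).div_const 2).congr_deriv (by ring)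
  have free_term : HasDerivAt (fun x : ℝ => (-x^2 + 2*x) / 2) (1 - α) α :=
    ((h₂.neg.add (h₁.const_mul 2)).div_const 2).congr_deriv (by ring)
  exact (((((sumSq_term.const_mul _).add (prod_term.const_mul _)).add
    (inv_term.div_const _)).add (sum_term.const_mul _)).add free_term).const_mul _

theorem deriv_lbar_zero (D : ℝ) {nh nv : ℝ} (hsum : nh + nv ≠ 0) :
    deriv (lbar D nh nv) 0 =
      2 * D * (3 * (nh^2 + nv^2) / (2 * (nh + nv)) + nh * nv / (2 * (nh + nv))
        - 1 / (4 * (nh + nv)) - (nh + nv) + 1) := by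
  rw [(hasDerivAt_lbar D nh nv 0).deriv]
  field_simp
  ring

section SlopeNumerator

variable {R : Type*} [CommRing R]

/-- The polynomial whose sign decides that of `∂l̄/∂α` at `α = 0`: the bracket in the formula for
that derivative, multiplied by the common denominator `4 * (a + b)`. -/
def slopeNumerator (a b : R) : R :=
  2 * a^2 + 2 * b^2 - 6 * a * b + 4 * (a + b) - 1

theorem slopeNumerator_comm (a b : R) : slopeNumerator a b = slopeNumerator b a := by
  unfold slopeNumerator
  ring

theorem slopeNumerator_eq (a b : R) :
    slopeNumerator a b = -((b - a) * (3 * a - 2 * b)) - (a + b) * (a - 4) - 1 := by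
  unfold slopeNumerator
  ring

variable [LinearOrder R] [IsStrictOrderedRing R] {a b : R}

theorem slopeNumerator_neg_of_le (ha : 4 ≤ a) (hab : a ≤ b) (hba : 2 * b ≤ 3 * a) :
    slopeNumerator a b < 0 := by
  have hratio : 0 ≤ (b - a) * (3 * a - 2 * b) :=
    mul_nonneg (sub_nonneg.2 hab) (sub_nonneg.2 hba)
  have hsize : 0 ≤ (a + b) * (a - 4) := mul_nonneg (by linarith) (sub_nonneg.2 ha)
  rw [slopeNumerator_eq]
  linarith

theorem slopeNumerator_neg (ha : 4 ≤ a) (hb : 4 ≤ b) (hab : 2 * a ≤ 3 * b)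
    (hba : 2 * b ≤ 3 * a) : slopeNumerator a b < 0 := by
  rcases le_total a b with hle | hle
  · exact slopeNumerator_neg_of_le ha hle hba
  · rw [slopeNumerator_comm]
    exact slopeNumerator_neg_of_le hb hle hab

end SlopeNumerator

theorem deriv_lbar_zero_eq_mul_slopeNumerator (D : ℝ) {nh nv : ℝ} (hsum : nh + nv ≠ 0) :
    deriv (lbar D nh nv) 0 = D / (2 * (nh + nv)) * slopeNumerator nh nv := by
  rw [deriv_lbar_zero D hsum, slopeNumerator]
  field_simp
  ring

theorem deriv_lbar_zero_neg_iff {D nh nv : ℝ} (hD : 0 < D) (hsum : 0 < nh + nv) :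
    deriv (lbar D nh nv) 0 < 0 ↔ slopeNumerator nh nv < 0 := by
  have hcoeff : 0 < D / (2 * (nh + nv)) := by positivity
  rw [deriv_lbar_zero_eq_mul_slopeNumerator D hsum.ne']
  exact smul_neg_iff_of_pos_left hcoeff

theorem lbar_deriv_at_zero
    (D nh nv : ℝ) (hD : 0 < D) (hsum : nh + nv ≠ 0) :
    deriv (fun α => lbar D nh nv α) 0 =
      2 * D * (3 * (nh^2 + nv^2) / (2 * (nh + nv)) + nh * nv / (2 * (nh + nv))
        - 1 / (4 * (nh + nv)) - (nh + nv) + 1) ∧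
    (4 ≤ nh → 4 ≤ nv → nh ≤ (3/2) * nv → nv ≤ (3/2) * nh →
      deriv (fun α => lbar D nh nv α) 0 < 0 ∧
      2 * nh^2 + 2 * nv^2 - 6 * nh * nv + 4 * (nh + nv) - 1 < 0) := by
  refine ⟨deriv_lbar_zero D hsum, fun hnh hnv hnh_le hnv_le => ?_⟩
  have hneg : slopeNumerator nh nv < 0 := slopeNumerator_neg hnh hnv (by linarith) (by linarith)
  exact ⟨(deriv_lbar_zero_neg_iff hD (by linarith)).2 hneg, hneg⟩
end

section
/- Fix real constants D > 0, τ_e > 0, a > 0, b > 0 and reals n_h, n_v with n_h ≥ 4, n_v ≥ 4, n_h ≤ (3/2)·n_v and n_v ≤ (3/2)·n_h. Define, for x ∈ [0, n_h + n_v], the maximum throughput function T_M(x) = (D/τ_e) · (n_h·(n_v − 1) + n_v·(n_h − 1))/(2·(a + b·(n_h + n_v))) · (2α − α²)/l̄(n_h, n_v, α), where α = x/(n_h + n_v). Then T_M attains its maximum over [0, n_h + n_v] at some interior point x* ∈ (0, n_h + n_v); in particular, the maximum throughput satisfies T_M(x*) > T_M(n_h + n_v) and T_M(x*) > T_M(0)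 = 0, so the maximum is not achieved by opening all loading stations. -/
/-- Maximum-throughput function of the (real-valued) number of open loading stations. -/
noncomputable def TM (D τe a b nh nv x : ℝ) : ℝ :=
  (D / τe) * ((nh * (nv - 1) + nv * (nh - 1)) / (2 * (a + b * (nh + nv)))) *
    ((2 * (x / (nh + nv)) - (x / (nh + nv))^2) / lbar D nh nv (x / (nh + nv)))

/-!
In the worker ratio `α`, the throughput is a positive multiple of `(2α - α²) / l̄(α)`. At `α = 1`
the numerator is stationary while `l̄` is increasing, so the throughput decreases there; it vanishes
at `α = 0`. Hence its maximum over the compact interval is interior. The comparison near `α = 1` is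
made quantitative by the factor `1 - α` of `l̄(α) - (2α - α²) l̄(1)`.
-/

section AverageDistance

variable {D nh nv α : ℝ}

lemma lbar_eq_mul (hs : nh + nv ≠ 0) :
    lbar D nh nv α = D / (6 * (nh + nv)) *
      ((nh ^ 2 + nv ^ 2) * (-α ^ 4 - 5 * α ^ 2 + 18 * α) + 3 * (nh * nv) * (2 * α - α ^ 2)
        + (3 * α ^ 3 - α ^ 2 - 3 * α - 5) + 6 * (nh + nv) ^ 2 * (1 - α) ^ 2
        + 6 * (nh + nv) * (2 * α - α ^ 2)) := by
  unfold lbar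
  field_simp
  ring

lemma lbar_pos (hD : 0 < D) (hnh : 0 ≤ nh) (hnv : 0 ≤ nv) (hs : 1 ≤ nh + nv)
    (hα : α ∈ Set.Icc (0 : ℝ) 1) : 0 < lbar D nh nv α := by
  obtain ⟨hα0, hα1⟩ := hα
  have hs0 : 0 < nh + nv := by linarith
  rw [lbar_eq_mul hs0.ne']
  refine mul_pos (by positivity) ?_
  have hα2 : α ^ 2 ≤ α := pow_le_of_le_one hα0 hα1 two_ne_zero
  have hα4 : α ^ 4 ≤ α := pow_le_of_le_one hα0 hα1 four_ne_zero
  have hu : 0 ≤ 2 * α - α ^ 2 := by linarith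
  have squares_ge : 1 / 2 ≤ nh ^ 2 + nv ^ 2 := by nlinarith [sq_nonneg (nh - nv)]
  have quartic_term : 1 / 2 * (12 * α) ≤ (nh ^ 2 + nv ^ 2) * (-α ^ 4 - 5 * α ^ 2 + 18 * α) :=
    mul_le_mul squares_ge (by linarith) (by linarith) (by positivity)
  have product_term : 0 ≤ 3 * (nh * nv) * (2 * α - α ^ 2) := by positivity
  -- The weights `(1 - α) ^ 2` and `2 * α - α ^ 2` sum to `1`; this absorbs the constant `-5`.
  have size_terms : 6 ≤ 6 * (nh + nv) ^ 2 * (1 - α) ^ 2 + 6 * (nh + nv) * (2 * α - α ^ 2) := by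
    have hsq : 1 * (1 - α) ^ 2 ≤ (nh + nv) ^ 2 * (1 - α) ^ 2 := by
      gcongr
      exact one_le_pow₀ hs
    have hlin : 1 * (2 * α - α ^ 2) ≤ (nh + nv) * (2 * α - α ^ 2) := by gcongr
    linarith
  have hα3 : 0 ≤ α ^ 3 := by positivity
  linarith

lemma lbar_sub_mul_lbar_one (hs : nh + nv ≠ 0) :
    lbar D nh nv α - (2 * α - α ^ 2) * lbar D nh nv 1 =
      D * (1 - α) / (6 * (nh + nv)) *
        (6 * (nh + nv) ^ 2 * (1 - α) - (nh ^ 2 + nv ^ 2) * (α * (2 - α) * (3 + α))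
          - (3 * α ^ 2 - 4 * α + 5)) := by
  rw [lbar_eq_mul hs, lbar_eq_mul hs]
  ring

lemma lbar_lt_mul_lbar_one (hD : 0 < D) (hs : 0 < nh + nv) (hα : α ∈ Set.Ico (3 / 4 : ℝ) 1) :
    lbar D nh nv α < (2 * α - α ^ 2) * lbar D nh nv 1 := by
  obtain ⟨hα0, hα1⟩ := hα
  rw [← sub_neg, lbar_sub_mul_lbar_one hs.ne']
  have hδ : 0 < 1 - α := sub_pos.2 hα1
  refine mul_neg_of_pos_of_neg (div_pos (mul_pos hD hδ) (by positivity)) ?_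
  have hcubic : 12 * (1 - α) ≤ α * (2 - α) * (3 + α) := by
    have hα2 : α ^ 2 ≤ α := pow_le_of_le_one (by linarith) hα1.le two_ne_zero
    have hα3 : α ^ 3 ≤ α := pow_le_of_le_one (by linarith) hα1.le three_ne_zero
    linarith
  have hquad : 0 < 3 * α ^ 2 - 4 * α + 5 := by linarith [sq_nonneg α]
  have hlead : 6 * (nh + nv) ^ 2 * (1 - α) ≤ (nh ^ 2 + nv ^ 2) * (α * (2 - α) * (3 + α)) :=
    calc 6 * (nh + nv) ^ 2 * (1 - α)
        ≤ 6 * (2 * (nh ^ 2 + nv ^ 2)) * (1 - α) := by gcongr; exact add_sq_le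
      _ = (nh ^ 2 + nv ^ 2) * (12 * (1 - α)) := by ring
      _ ≤ (nh ^ 2 + nv ^ 2) * (α * (2 - α) * (3 + α)) := by gcongr
  linarith

end AverageDistance

section Throughput

variable {D τe a b nh nv : ℝ}

/-- The factor of the maximum throughput that does not depend on the number of open loading
stations. -/
noncomputable def throughputCoeff (D τe a b nh nv : ℝ) : ℝ :=
  D / τe * ((nh * (nv - 1) + nv * (nh - 1)) / (2 * (a + b * (nh + nv))))

lemma throughputCoeff_pos (hD : 0 < D) (hτe : 0 < τe) (hden : 0 < a + b * (nh + nv))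
    (hnum : 0 < nh * (nv - 1) + nv * (nh - 1)) : 0 < throughputCoeff D τe a b nh nv := by
  unfold throughputCoeff
  positivity

lemma TM_zero : TM D τe a b nh nv 0 = 0 := by
  simp [TM]

lemma TM_mul_add (hs : nh + nv ≠ 0) (α : ℝ) :
    TM D τe a b nh nv (α * (nh + nv)) =
      throughputCoeff D τe a b nh nv * ((2 * α - α ^ 2) / lbar D nh nv α) := by
  rw [TM, mul_div_cancel_right₀ _ hs, throughputCoeff]

lemma TM_add (hs : nh + nv ≠ 0) :
    TM D τe a b nh nv (nh + nv) = throughputCoeff D τe a b nh nv * (1 / lbar D nh nv 1) := by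
  convert TM_mul_add hs 1 using 2 <;> norm_num

lemma TM_add_pos (hC : 0 < throughputCoeff D τe a b nh nv) (hD : 0 < D) (hnh : 0 ≤ nh)
    (hnv : 0 ≤ nv) (hs : 1 ≤ nh + nv) : 0 < TM D τe a b nh nv (nh + nv) := by
  rw [TM_add (by linarith)]
  exact mul_pos hC (one_div_pos.2 (lbar_pos hD hnh hnv hs (Set.right_mem_Icc.2 zero_le_one)))

lemma TM_add_lt_TM_mul_add (hC : 0 < throughputCoeff D τe a b nh nv) (hD : 0 < D) (hnh : 0 ≤ nh)
    (hnv : 0 ≤ nv) (hs : 1 ≤ nh + nv) {α : ℝ} (hα : α ∈ Set.Ico (3 / 4 : ℝ) 1) :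
    TM D τe a b nh nv (nh + nv) < TM D τe a b nh nv (α * (nh + nv)) := by
  have hs0 : 0 < nh + nv := by linarith
  have hl1 : 0 < lbar D nh nv 1 := lbar_pos hD hnh hnv hs (Set.right_mem_Icc.2 zero_le_one)
  have hlα : 0 < lbar D nh nv α := lbar_pos hD hnh hnv hs ⟨by linarith [hα.1], hα.2.le⟩
  rw [TM_add hs0.ne', TM_mul_add hs0.ne']
  refine mul_lt_mul_of_pos_left ?_ hC
  rw [div_lt_div_iff₀ hl1 hlα, one_mul]
  exact lbar_lt_mul_lbar_one hD hs0 hα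

lemma continuousOn_TM (hD : 0 < D) (hnh : 0 ≤ nh) (hnv : 0 ≤ nv) (hs : 1 ≤ nh + nv) :
    ContinuousOn (TM D τe a b nh nv) (Set.Icc 0 (nh + nv)) := by
  have hs0 : 0 < nh + nv := by linarith
  refine continuousOn_const.mul (ContinuousOn.div (by fun_prop) (by unfold lbar; fun_prop) ?_)
  exact fun x hx ↦
    (lbar_pos hD hnh hnv hs ⟨div_nonneg hx.1 hs0.le, (div_le_one hs0).2 hx.2⟩).ne'

end Throughput

theorem TM_interior_max_general
    (D τe a b nh nv : ℝ) (hD : 0 < D) (hτe : 0 < τe) (ha : 0 < a) (hb : 0 < b)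
    (hnh : 0 < nh) (hnv : 0 < nv) (hnum : 0 < nh * (nv - 1) + nv * (nh - 1)) :
    ∃ xstar ∈ Set.Ioo (0:ℝ) (nh + nv),
      (∀ x ∈ Set.Icc (0:ℝ) (nh + nv), TM D τe a b nh nv x ≤ TM D τe a b nh nv xstar) ∧
      TM D τe a b nh nv (nh + nv) < TM D τe a b nh nv xstar ∧
      TM D τe a b nh nv 0 < TM D τe a b nh nv xstar ∧
      TM D τe a b nh nv 0 = 0 := by
  have hs : 1 ≤ nh + nv := by nlinarith [sq_nonneg (nh - nv)]
  have hC : 0 < throughputCoeff D τe a b nh nv := throughputCoeff_pos hD hτe (by positivity) hnum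
  have hlast_pos := TM_add_pos hC hD hnh.le hnv.le hs
  have hlast_lt := TM_add_lt_TM_mul_add hC hD hnh.le hnv.le hs (α := 3 / 4) (by norm_num)
  have hmem : 3 / 4 * (nh + nv) ∈ Set.Icc 0 (nh + nv) := ⟨by linarith, by linarith⟩
  have hendpoints : ∀ y ∈ Set.Icc 0 (nh + nv) \ Set.Ioo 0 (nh + nv),
      TM D τe a b nh nv y < TM D τe a b nh nv (3 / 4 * (nh + nv)) := by
    rw [Set.Icc_sdiff_Ioo_same (by linarith)]
    rintro y (rfl | rfl)
    · exact TM_zero.trans_lt (hlast_pos.trans hlast_lt)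
    · exact hlast_lt
  obtain ⟨xstar, hxstar, hmax⟩ := isCompact_Icc.exists_isMaxOn_mem_subset
    (continuousOn_TM hD hnh.le hnv.le hs) hmem hendpoints
  have hlast : TM D τe a b nh nv (nh + nv) < TM D τe a b nh nv xstar :=
    hlast_lt.trans_le (hmax hmem)
  exact ⟨xstar, hxstar, fun _ hx ↦ hmax hx, hlast,
    TM_zero.trans_lt (hlast_pos.trans hlast), TM_zero⟩

theorem TM_interior_max
    (D τe a b nh nv : ℝ) (hD : 0 < D) (hτe : 0 < τe) (ha : 0 < a) (hb : 0 < b)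
    (hnh : 4 ≤ nh) (hnv : 4 ≤ nv) (hhv : nh ≤ (3/2) * nv) (hvh : nv ≤ (3/2) * nh) :
    ∃ xstar ∈ Set.Ioo (0:ℝ) (nh + nv),
      (∀ x ∈ Set.Icc (0:ℝ) (nh + nv), TM D τe a b nh nv x ≤ TM D τe a b nh nv xstar) ∧
      TM D τe a b nh nv (nh + nv) < TM D τe a b nh nv xstar ∧
      TM D τe a b nh nv 0 < TM D τe a b nh nv xstar ∧
      TM D τe a b nh nv 0 = 0 := by
  exact TM_interior_max_general D τe a b nh nv hD hτe ha hb (by linarith) (by linarith)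
    (by nlinarith)
end
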